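/- Let d = 1, let T, Ω ⊆ ℝ be measurable sets with 0 < |T| < ∞ and 0 < |Ω| < ∞, and let f ∈ L¹(ℝ) with f̂ ∈ L¹(ℝ), f ≠ 0. Suppose f is ε_T-concentrated on T and f̂ is ε_Ω-concentrated on Ω, where 0 ≤ ε_T, ε_Ω ≤ 1 and ε_T + ε_Ω ≤ 1. Then Δf · Δf̂ ≥ (1 − ε_T²)(1 − ε_Ω²) ‖f‖₂² / (4π² |T||Ω|), where Δf = (∫_ℝ |t|² |f(t)|² dt)^{1/2} and Δf̂ = (∫_ℝ |ω|² |f̂(ω)|² dω)^{1/2}. -/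

import Mathlib

open MeasureTheory FourierTransform
open scoped Real ENNReal

/-- Fourier inversion almost everywhere, without continuity assumption. -/
lemma aux_inversion (f : ℝ → ℂ) (hf1 : Integrable f volume) (hfhat1 : Integrable (𝓕 f) volume) :
    ∀ᵐ x, f x = 𝓕⁻ (𝓕 f) x := by
  have hcont : Continuous (𝓕⁻ (𝓕 f)) := by
    exact VectorFourier.fourierIntegral_continuous Real.continuous_fourierChar
      (L := -innerₗ ℝ) (by
        have : Continuous fun p : ℝ × ℝ => -(inner ℝ p.1 p.2) := continuous_inner.neg
        exact this) hfhat1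
  refine ae_eq_of_integral_contDiff_smul_eq hf1.locallyIntegrable hcont.locallyIntegrable ?_
  intro g hg hgs
  have hgs' : HasCompactSupport (fun x => (g x : ℂ)) := hgs.comp_left (g := fun r : ℝ => (r : ℂ)) rfl
  let φ : SchwartzMap ℝ ℂ := hgs'.toSchwartzMap (Complex.ofRealCLM.contDiff.comp hg)
  have hφ : ∀ x, φ x = (g x : ℂ) := fun x => rfl
  have h1 : ∫ x, (𝓕⁻ φ) x • 𝓕 f x = ∫ x, 𝓕 (𝓕⁻ φ) x • f x := by
    have := VectorFourier.integral_bilin_fourierIntegral_eq_flip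
      (ContinuousLinearMap.lsmul ℂ ℂ) (L := innerₗ ℝ) (μ := volume) (ν := volume)
      (f := (𝓕⁻ φ : SchwartzMap ℝ ℂ)) (g := f)
      Real.continuous_fourierChar continuous_inner (SchwartzMap.integrable _) hf1
    rw [flip_innerₗ] at this
    exact this.symm
  have h2 : ∫ x, (𝓕⁻ φ) x • 𝓕 f x = ∫ x, φ x • 𝓕⁻ (𝓕 f) x := by
    have := VectorFourier.integral_bilin_fourierIntegral_eq_flip
      (ContinuousLinearMap.lsmul ℂ ℂ) (L := -innerₗ ℝ) (μ := volume) (ν := volume)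
      (f := φ) (g := 𝓕 f)
      Real.continuous_fourierChar (by
        have : Continuous fun p : ℝ × ℝ => -(inner ℝ p.1 p.2) := continuous_inner.neg
        exact this) (SchwartzMap.integrable _) hfhat1
    have hfl : (-innerₗ ℝ : ℝ →ₗ[ℝ] ℝ →ₗ[ℝ] ℝ).flip = -innerₗ ℝ := by
      ext; simp
    rw [hfl] at this
    rw [SchwartzMap.fourierInv_coe]
    exact this
  rw [FourierTransform.fourier_fourierInv_eq] at h1
  have := h1.symm.trans h2
  simpa [hφ] using this

lemma aux_fourier_bound (f : ℝ → ℂ) (x : ℝ) : ‖𝓕 f x‖ ≤ ∫ t, ‖f t‖ :=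
  VectorFourier.norm_fourierIntegral_le_integral_norm _ _ _ _ _

lemma aux_fourierInv_bound (f : ℝ → ℂ) (x : ℝ) : ‖𝓕⁻ f x‖ ≤ ∫ t, ‖f t‖ :=
  VectorFourier.norm_fourierIntegral_le_integral_norm _ _ _ _ _

lemma aux_plancherel (f : ℝ → ℂ) (hf1 : Integrable f volume) (hfhat1 : Integrable (𝓕 f) volume) :
    ∫ ω, ‖𝓕 f ω‖ ^ 2 = ∫ x, ‖f x‖ ^ 2 := by
  have key := VectorFourier.integral_sesq_fourierIntegral_eq_neg_flip (innerSL ℂ)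
    (L := innerₗ ℝ) (μ := volume) (ν := volume) (f := f) (g := 𝓕 f)
    Real.continuous_fourierChar continuous_inner hf1 hfhat1
  rw [flip_innerₗ] at key
  have key2 : ∫ ω, inner ℂ (𝓕 f ω) (𝓕 f ω) = ∫ x, inner ℂ (f x) (𝓕⁻ (𝓕 f) x) := key
  have h3 : ∫ x, inner ℂ (f x) (𝓕⁻ (𝓕 f) x) = ∫ x, inner ℂ (f x) (f x) := by
    apply integral_congr_ae
    filter_upwards [aux_inversion f hf1 hfhat1] with x hx
    rw [← hx]
  rw [h3] at key2
  apply Complex.ofRealLI.injective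
  simpa [← LinearIsometry.integral_comp_comm, inner_self_eq_norm_sq_to_K] using key2

lemma aux_sq_integrable (g : ℝ → ℂ) (hg : Integrable g volume) (M : ℝ) (hM : ∀ᵐ x, ‖g x‖ ≤ M) :
    Integrable (fun x => ‖g x‖ ^ 2) volume := by
  refine (hg.norm.const_mul M).mono' (hg.aestronglyMeasurable.norm.pow 2) ?_
  filter_upwards [hM] with x hx
  rw [Real.norm_of_nonneg (by positivity), sq]
  exact mul_le_mul_of_nonneg_right hx (norm_nonneg _)

lemma aux_moment_pos (g : ℝ → ℂ) (hg : AEStronglyMeasurable g volume) (hg0 : ¬ g =ᵐ[volume] 0) :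
    ∫⁻ t, ENNReal.ofReal (t ^ 2 * ‖g t‖ ^ 2) ≠ 0 := by
  intro h
  rw [lintegral_eq_zero_iff' (by fun_prop)] at h
  apply hg0
  have h0 : ∀ᵐ x : ℝ, x ≠ 0 := by simp [ae_iff]
  filter_upwards [h, h0] with x hx hx0
  have : x ^ 2 * ‖g x‖ ^ 2 ≤ 0 := by simpa using hx
  have h2 : ‖g x‖ ^ 2 ≤ 0 := by
    by_contra hc
    push Not at hc
    have := mul_pos (pow_pos (abs_pos.mpr hx0) 2) hc
    rw [sq_abs] at this
    linarith
  have h3 : ‖g x‖ = 0 := by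
    have := sq_nonneg ‖g x‖
    exact pow_eq_zero_iff (two_ne_zero) |>.mp (le_antisymm h2 this)
  simpa using h3

lemma aux_carlson (g : ℝ → ℂ) (hg : Integrable g volume)
    (h2 : Integrable (fun x => ‖g x‖ ^ 2) volume)
    (hD : Integrable (fun x => x ^ 2 * ‖g x‖ ^ 2) volume)
    (hn : 0 < ∫ x, ‖g x‖ ^ 2) (hd : 0 < ∫ x, x ^ 2 * ‖g x‖ ^ 2) :
    (∫ x, ‖g x‖) ^ 2 ≤ 2 * π * √(∫ x, ‖g x‖ ^ 2) * √(∫ x, x ^ 2 * ‖g x‖ ^ 2) := by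
  set n := ∫ x, ‖g x‖ ^ 2 with hn_def
  set D := ∫ x, x ^ 2 * ‖g x‖ ^ 2 with hD_def
  set u := √n with hu_def
  set d := √D with hd_def
  have hu : 0 < u := Real.sqrt_pos.mpr hn
  have hdp : 0 < d := Real.sqrt_pos.mpr hd
  have hun : n = u ^ 2 := (Real.sq_sqrt hn.le).symm
  have hdD : D = d ^ 2 := (Real.sq_sqrt hd.le).symm
  set a := u / d with ha_def
  have ha : 0 < a := div_pos hu hdp
  set c := √(π * d / (2 * u ^ 3)) with hc_def
  have hcpos : 0 < π * d / (2 * u ^ 3) := by positivity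
  have hc : 0 < c := Real.sqrt_pos.mpr hcpos
  have hc2 : c ^ 2 = π * d / (2 * u ^ 3) := Real.sq_sqrt hcpos.le
  have hI : Integrable (fun x : ℝ => (1 + (a * x) ^ 2)⁻¹) :=
    integrable_inv_one_add_sq.comp_mul_left' ha.ne'
  have hIv : ∫ x : ℝ, (1 + (a * x) ^ 2)⁻¹ = π / a := by
    rw [Measure.integral_comp_mul_left (fun x : ℝ => (1 + x ^ 2)⁻¹) a,
      integral_univ_inv_one_add_sq, abs_of_pos (by positivity), smul_eq_mul]
    field_simp
  have hle : ∫ x, ‖g x‖ ≤ ∫ x, ((c / 2) * (‖g x‖ ^ 2 + a ^ 2 * (x ^ 2 * ‖g x‖ ^ 2))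
      + (1 / (2 * c)) * (1 + (a * x) ^ 2)⁻¹) := by
    apply integral_mono hg.norm
    · exact ((h2.add (hD.const_mul _)).const_mul _).add (hI.const_mul _)
    · intro x
      simp only
      have hw : 0 < 1 + (a * x) ^ 2 := by positivity
      have e : (c / 2) * (‖g x‖ ^ 2 + a ^ 2 * (x ^ 2 * ‖g x‖ ^ 2))
          + (1 / (2 * c)) * (1 + (a * x) ^ 2)⁻¹ - ‖g x‖
          = (c * (1 + (a * x) ^ 2) * ‖g x‖ - 1) ^ 2 / (2 * c * (1 + (a * x) ^ 2)) := by
        field_simp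
        ring
      have : 0 ≤ (c * (1 + (a * x) ^ 2) * ‖g x‖ - 1) ^ 2 / (2 * c * (1 + (a * x) ^ 2)) := by
        positivity
      linarith
  have hS : Integrable (fun x => (c / 2) * (‖g x‖ ^ 2 + a ^ 2 * (x ^ 2 * ‖g x‖ ^ 2))) volume :=
    (h2.add (hD.const_mul _)).const_mul _
  rw [integral_add hS (hI.const_mul _), integral_const_mul,
    integral_const_mul, hIv, integral_add h2 (hD.const_mul _), integral_const_mul,
    ← hn_def, ← hD_def, hun, hdD] at hle
  have hval : c / 2 * (u ^ 2 + a ^ 2 * d ^ 2) + 1 / (2 * c) * (π / a) = 2 * c * u ^ 2 := by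
    have h1 : a ^ 2 * d ^ 2 = u ^ 2 := by rw [ha_def]; field_simp
    have h3 : π / a = 2 * c ^ 2 * u ^ 2 := by rw [hc2, ha_def]; field_simp
    rw [h1, h3]; field_simp; ring
  rw [hval] at hle
  have h0 : 0 ≤ ∫ x, ‖g x‖ := integral_nonneg fun x => norm_nonneg _
  calc (∫ x, ‖g x‖) ^ 2 ≤ (2 * c * u ^ 2) ^ 2 := pow_le_pow_left₀ h0 hle 2
    _ = 4 * c ^ 2 * u ^ 4 := by ring
    _ = 2 * π * u * d := by rw [hc2]; field_simp; ring

lemma aux_conc (g : ℝ → ℂ) (M ε : ℝ) (hM : ∀ᵐ x, ‖g x‖ ≤ M) (hε : 0 ≤ ε)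
    (h2 : Integrable (fun x => ‖g x‖ ^ 2) volume)
    (T : Set ℝ) (hT : MeasurableSet T) (hTfin : volume T < ⊤)
    (hc : √(∫ x in Tᶜ, ‖g x‖ ^ 2) ≤ ε * √(∫ x, ‖g x‖ ^ 2)) :
    (1 - ε ^ 2) * (∫ x, ‖g x‖ ^ 2) ≤ (volume T).toReal * M ^ 2 := by
  have hn : 0 ≤ ∫ x, ‖g x‖ ^ 2 := integral_nonneg fun x => by positivity
  have hn' : 0 ≤ ∫ x in Tᶜ, ‖g x‖ ^ 2 := integral_nonneg fun x => by positivity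
  have h1 := pow_le_pow_left₀ (Real.sqrt_nonneg _) hc 2
  rw [mul_pow, Real.sq_sqrt hn, Real.sq_sqrt hn'] at h1
  have h3 := integral_add_compl hT h2
  have h4 : ∫ x in T, ‖g x‖ ^ 2 ≤ ∫ x in T, M ^ 2 := by
    apply integral_mono_ae h2.integrableOn
    · exact integrableOn_const hTfin.ne
    · filter_upwards [ae_restrict_of_ae hM] with x hx
      exact pow_le_pow_left₀ (norm_nonneg _) hx 2
  rw [setIntegral_const, smul_eq_mul, Measure.real] at h4
  linarith

lemma aux_moment_eq (g : ℝ → ℂ) (hg : AEStronglyMeasurable g volume)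
    (hfin : ∫⁻ t, ENNReal.ofReal (t ^ 2 * ‖g t‖ ^ 2) ≠ ⊤) :
    Integrable (fun x => x ^ 2 * ‖g x‖ ^ 2) volume ∧
    ENNReal.ofReal (∫ x, x ^ 2 * ‖g x‖ ^ 2) = ∫⁻ t, ENNReal.ofReal (t ^ 2 * ‖g t‖ ^ 2) := by
  have hnn : 0 ≤ᵐ[volume] fun x => x ^ 2 * ‖g x‖ ^ 2 := ae_of_all _ fun x => by
    simp only [Pi.zero_apply]; positivity
  have hm : AEStronglyMeasurable (fun x => x ^ 2 * ‖g x‖ ^ 2) volume := by fun_prop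
  have hi : Integrable (fun x => x ^ 2 * ‖g x‖ ^ 2) volume :=
    (lintegral_ofReal_ne_top_iff_integrable hm hnn).mp hfin
  exact ⟨hi, ofReal_integral_eq_lintegral_ofReal hi hnn⟩

lemma aux_final (p q t w N a b X Y : ℝ) (hp : 0 ≤ p) (hq : 0 ≤ q) (ht : 0 ≤ t) (hw : 0 ≤ w)
    (hN : 0 < N) (ha : 0 ≤ a) (hb : 0 ≤ b) (d1 : p * N ≤ t * X) (d2 : q * N ≤ w * Y)
    (c2 : X ≤ 2 * π * √N * b) (c1 : Y ≤ 2 * π * √N * a) :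
    p * q * N / (4 * π ^ 2) ≤ a * b * (t * w) := by
  obtain ⟨s, hs, rfl⟩ : ∃ s : ℝ, 0 < s ∧ s ^ 2 = N :=
    ⟨√N, Real.sqrt_pos.mpr hN, Real.sq_sqrt hN.le⟩
  rw [Real.sqrt_sq hs.le] at c1 c2
  have hpi := Real.pi_pos
  have e1 : p * s ≤ t * (2 * π * b) := by
    have := d1.trans (mul_le_mul_of_nonneg_left c2 ht)
    refine le_of_mul_le_mul_right ?_ hs
    linarith
  have e2 : q * s ≤ w * (2 * π * a) := by
    have := d2.trans (mul_le_mul_of_nonneg_left c1 hw)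
    refine le_of_mul_le_mul_right ?_ hs
    linarith
  have e3 := mul_le_mul e1 e2 (by positivity) (by positivity)
  rw [div_le_iff₀ (by positivity)]
  linarith

/-- **An ε-concentration version of the Heisenberg uncertainty principle.** For `d = 1`,
if `f ∈ L¹(ℝ)` with `𝓕f ∈ L¹(ℝ)`, `f ≠ 0`, is `ε_T`-concentrated on `T` and `𝓕f` is
`ε_Ω`-concentrated on `Ω`, where `0 < |T| < ∞`, `0 < |Ω| < ∞`, `0 ≤ ε_T, ε_Ω ≤ 1` and
`ε_T + ε_Ω ≤ 1`, then `Δf · Δ𝓕f ≥ (1-ε_T²)(1-ε_Ω²)‖f‖₂² / (4π²|T||Ω|)`, where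
`Δf = (∫ t²|f(t)|² dt)^{1/2}` and `Δ𝓕f = (∫ ω²|𝓕f(ω)|² dω)^{1/2}` (the standard
deviations are computed in `ℝ≥0∞`, so the inequality also covers the case of infinite
standard deviation). -/
theorem heisenberg_epsilon_concentration
    (T Ω : Set ℝ) (hT : MeasurableSet T) (hΩ : MeasurableSet Ω)
    (hTpos : 0 < volume T) (hTfin : volume T < ⊤)
    (hΩpos : 0 < volume Ω) (hΩfin : volume Ω < ⊤)
    (f : ℝ → ℂ)
    (hf1 : Integrable f volume) (hfhat1 : Integrable (𝓕 f) volume)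
    (hf0 : ¬ f =ᵐ[volume] 0)
    (εT εΩ : ℝ) (hεT0 : 0 ≤ εT) (hεT1 : εT ≤ 1) (hεΩ0 : 0 ≤ εΩ) (hεΩ1 : εΩ ≤ 1)
    (hsum : εT + εΩ ≤ 1)
    (hconcT : Real.sqrt (∫ x in Tᶜ, ‖f x‖ ^ 2) ≤ εT * Real.sqrt (∫ x, ‖f x‖ ^ 2))
    (hconcΩ : Real.sqrt (∫ ω in Ωᶜ, ‖𝓕 f ω‖ ^ 2) ≤ εΩ * Real.sqrt (∫ ω, ‖𝓕 f ω‖ ^ 2)) :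
    ENNReal.ofReal ((1 - εT ^ 2) * (1 - εΩ ^ 2) * (∫ t, ‖f t‖ ^ 2) / (4 * π ^ 2)) /
        (volume T * volume Ω) ≤
      (∫⁻ t, ENNReal.ofReal (t ^ 2 * ‖f t‖ ^ 2)) ^ ((1 : ℝ) / 2) *
        (∫⁻ ω, ENNReal.ofReal (ω ^ 2 * ‖𝓕 f ω‖ ^ 2)) ^ ((1 : ℝ) / 2) := by
  have hinv := aux_inversion f hf1 hfhat1
  have hMf : ∀ᵐ x, ‖f x‖ ≤ ∫ t, ‖𝓕 f t‖ := by
    filter_upwards [hinv] with x hx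
    rw [hx]; exact aux_fourierInv_bound _ _
  have hMg : ∀ᵐ x, ‖𝓕 f x‖ ≤ ∫ t, ‖f t‖ := ae_of_all _ (aux_fourier_bound f)
  have h2f := aux_sq_integrable f hf1 _ hMf
  have h2g := aux_sq_integrable (𝓕 f) hfhat1 _ hMg
  have hpl := aux_plancherel f hf1 hfhat1
  have hg0 : ¬ 𝓕 f =ᵐ[volume] 0 := by
    intro h
    apply hf0
    have hz : ∫ t, ‖𝓕 f t‖ = 0 := by
      rw [integral_eq_zero_iff_of_nonneg (fun x => norm_nonneg _) hfhat1.norm]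
      filter_upwards [h] with x hx
      simp [hx]
    filter_upwards [hMf] with x hx
    rw [hz] at hx
    simpa using hx
  have hA0 := aux_moment_pos f hf1.aestronglyMeasurable hf0
  have hB0 := aux_moment_pos (𝓕 f) hfhat1.aestronglyMeasurable hg0
  have hn : 0 < ∫ x, ‖f x‖ ^ 2 := by
    rw [integral_pos_iff_support_of_nonneg (fun x => by positivity) h2f]
    rw [pos_iff_ne_zero]
    intro h
    apply hf0
    filter_upwards [measure_eq_zero_iff_ae_notMem.mp h] with x hx
    simpa using hx
  by_cases hA : ∫⁻ t, ENNReal.ofReal (t ^ 2 * ‖f t‖ ^ 2) = ⊤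
  · rw [hA, ENNReal.top_rpow_of_pos (by norm_num), ENNReal.top_mul]
    · exact le_top
    · intro h
      rw [ENNReal.rpow_eq_zero_iff_of_pos (by norm_num)] at h
      exact hB0 h
  by_cases hB : ∫⁻ t, ENNReal.ofReal (t ^ 2 * ‖𝓕 f t‖ ^ 2) = ⊤
  · rw [hB, ENNReal.top_rpow_of_pos (by norm_num), ENNReal.mul_top]
    · exact le_top
    · intro h
      rw [ENNReal.rpow_eq_zero_iff_of_pos (by norm_num)] at h
      exact hA0 h
  obtain ⟨hAi, hAe⟩ := aux_moment_eq f hf1.aestronglyMeasurable hA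
  obtain ⟨hBi, hBe⟩ := aux_moment_eq (𝓕 f) hfhat1.aestronglyMeasurable hB
  rw [← hAe] at hA0 ⊢
  rw [← hBe] at hB0 ⊢
  have hAp : 0 < ∫ x, x ^ 2 * ‖f x‖ ^ 2 := by simpa using hA0
  have hBp : 0 < ∫ x, x ^ 2 * ‖𝓕 f x‖ ^ 2 := by simpa using hB0
  have c1 := aux_carlson f hf1 h2f hAi hn hAp
  have c2 := aux_carlson (𝓕 f) hfhat1 h2g hBi (hpl ▸ hn) hBp
  have d1 := aux_conc f _ εT hMf hεT0 h2f T hT hTfin hconcT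
  have d2 := aux_conc (𝓕 f) _ εΩ hMg hεΩ0 h2g Ω hΩ hΩfin hconcΩ
  rw [hpl] at c2 d2
  rw [ENNReal.ofReal_rpow_of_nonneg hAp.le (by norm_num),
    ENNReal.ofReal_rpow_of_nonneg hBp.le (by norm_num), ← Real.sqrt_eq_rpow, ← Real.sqrt_eq_rpow]
  apply ENNReal.div_le_of_le_mul
  rw [← ENNReal.ofReal_toReal hTfin.ne, ← ENNReal.ofReal_toReal hΩfin.ne,
    ← ENNReal.ofReal_mul (by positivity), ← ENNReal.ofReal_mul (by positivity),
    ← ENNReal.ofReal_mul (by positivity)]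
  apply ENNReal.ofReal_le_ofReal
  have ht : 0 ≤ (volume T).toReal := ENNReal.toReal_nonneg
  have hw : 0 ≤ (volume Ω).toReal := ENNReal.toReal_nonneg
  have hp : 0 ≤ 1 - εT ^ 2 := by nlinarith
  have hq : 0 ≤ 1 - εΩ ^ 2 := by nlinarith
  exact aux_final _ _ _ _ _ _ _ _ _ hp hq ht hw hn (Real.sqrt_nonneg _) (Real.sqrt_nonneg _)
    d1 d2 c2 c1
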